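/- Let Φ : ℝ^{n+1} → ℝ be a C² function and x ∈ ℝ^{n+1} a point where ∇Φ(x) = e_{n+1}. Then for every t ∈ ℝ, det(I_{n+1} + t·M(Φ)(x)) = (1 + t·A_mcurv(Φ)(x)) · det(I_n + t·B), where B is the n×n matrix with entries B_{ij} = -∂_i∂_jΦ(x) for 1 ≤ i, j ≤ n, and A_mcurv(Φ)(x) = trace(B). -/

import Mathlib

noncomputable section

/-- The partial derivative `∂ₐΦ(x)`. -/
def pderiv1 {m : ℕ} (Φ : EuclideanSpace ℝ (Fin m) → ℝ)
    (x : EuclideanSpace ℝ (Fin m)) (a : Fin m) : ℝ :=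
  fderiv ℝ Φ x (EuclideanSpace.single a 1)

/-- The second partial derivative `∂ₐ∂_bΦ(x)`. -/
def pderiv2 {m : ℕ} (Φ : EuclideanSpace ℝ (Fin m) → ℝ)
    (x : EuclideanSpace ℝ (Fin m)) (a b : Fin m) : ℝ :=
  fderiv ℝ (fun y => fderiv ℝ Φ y (EuclideanSpace.single b 1)) x (EuclideanSpace.single a 1)

/-- The mean-curvature dual density
`A_mcurv(Φ)(x) = -ΔΦ(x) + (Σ_{a,b} ∂ₐΦ ∂_bΦ ∂ₐ∂_bΦ)/(Σ_c (∂_cΦ)²)`. -/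
def Amcurv {m : ℕ} (Φ : EuclideanSpace ℝ (Fin m) → ℝ)
    (x : EuclideanSpace ℝ (Fin m)) : ℝ :=
  -(∑ a, pderiv2 Φ x a a) +
    (∑ a, ∑ b, pderiv1 Φ x a * pderiv1 Φ x b * pderiv2 Φ x a b) /
      (∑ c, (pderiv1 Φ x c) ^ 2)

/-- The matrix-valued dual density
`M_{ab}(Φ) = -∂ₐ∂_bΦ − ∂ₐΦ∂_bΦ·ΔΦ/‖∇Φ‖² + (∂ₐΦ·Σ_d ∂_dΦ∂_d∂_bΦ + ∂_bΦ·Σ_d ∂_dΦ∂_d∂ₐΦ)/‖∇Φ‖²`. -/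
def Mmat {m : ℕ} (Φ : EuclideanSpace ℝ (Fin m) → ℝ)
    (x : EuclideanSpace ℝ (Fin m)) : Matrix (Fin m) (Fin m) ℝ :=
  Matrix.of fun a b =>
    -pderiv2 Φ x a b
      - pderiv1 Φ x a * pderiv1 Φ x b * (∑ d, pderiv2 Φ x d d) /
          (∑ c, (pderiv1 Φ x c) ^ 2)
      + (pderiv1 Φ x a * (∑ d, pderiv1 Φ x d * pderiv2 Φ x d b) +
          pderiv1 Φ x b * (∑ d, pderiv1 Φ x d * pderiv2 Φ x d a)) /
          (∑ c, (pderiv1 Φ x c) ^ 2)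

/-! Write `p = ∇Φ(x)` and `H = Hess Φ(x)`. The row vector `pᵀ` is a left eigenvector of `M(Φ)(x)` with
eigenvalue `A_mcurv(Φ)(x)`, so `M(Φ)(x)` preserves the tangent hyperplane `p^⊥`. On this hyperplane
every term of `M(Φ)(x)` with a factor `p` drops out under tangential projection, leaving the
compression of `-H`. In a basis made of an orthonormal frame `E` of `p^⊥` followed by `p`, the
matrix `1 + t M(Φ)(x)` is therefore block triangular with diagonal blocks `1 - t EᵀHE` and
`1 + t A_mcurv(Φ)(x)`. The trace of `-EᵀHE` is found from `EEᵀ = 1 - ppᵀ / ‖p‖²`. -/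

open Matrix

section TangentFrame

variable {R m ι : Type*} [CommSemiring R] [Fintype m] [Fintype ι] [DecidableEq ι]

/-- The columns of `E` form an orthonormal basis of the hyperplane `p^⊥`, for the bilinear form
`⬝ᵥ`; the cardinality condition says that there are as many columns as the dimension of `p^⊥` for
nonzero `p`. -/
structure IsTangentFrame (p : m → R) (E : Matrix m ι R) : Prop where
  transpose_mul_self : Eᵀ * E = 1
  vecMul_eq_zero : p ᵥ* E = 0
  card_eq : Fintype.card m = Fintype.card ι + 1

theorem IsTangentFrame.transpose_mulVec_eq_zero {p : m → R} {E : Matrix m ι R}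
    (h : IsTangentFrame p E) : Eᵀ *ᵥ p = 0 := by
  rw [mulVec_transpose, h.vecMul_eq_zero]

/-- The standard basis vectors other than `e_k`, as the columns of a matrix. -/
def coordinateFrame (R : Type*) [Zero R] [One R] {n : ℕ} (k : Fin (n + 1)) :
    Matrix (Fin (n + 1)) (Fin n) R :=
  (1 : Matrix _ _ R).submatrix id k.succAbove

theorem transpose_coordinateFrame_mul_mul {n : ℕ} (k : Fin (n + 1))
    (A : Matrix (Fin (n + 1)) (Fin (n + 1)) R) :
    (coordinateFrame R k)ᵀ * A * coordinateFrame R k = A.submatrix k.succAbove k.succAbove := by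
  ext i j
  simp [coordinateFrame, mul_apply, one_apply]

theorem isTangentFrame_coordinateFrame {n : ℕ} (k : Fin (n + 1)) :
    IsTangentFrame (Pi.single k 1) (coordinateFrame R k) where
  transpose_mul_self := by
    rw [← Matrix.mul_one (coordinateFrame R k)ᵀ, transpose_coordinateFrame_mul_mul,
      submatrix_one _ Fin.succAbove_right_injective]
  vecMul_eq_zero := by
    ext j
    simp [coordinateFrame, (Fin.succAbove_ne k j).symm]
  card_eq := by simp

end TangentFrame

section AdaptedFrame

variable {K m ι : Type*} [Field K] [Fintype m] [Fintype ι] [DecidableEq ι]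

/-- The square matrix `[E | p]`, whose columns are a tangent frame followed by the normal `p`. -/
def adaptedFrame (p : m → K) (E : Matrix m ι K) : Matrix m (ι ⊕ Unit) K :=
  fromCols E (replicateCol Unit p)

/-- The dual basis of `adaptedFrame p E`, as the rows of a matrix. -/
def adaptedCoframe (p : m → K) (E : Matrix m ι K) : Matrix (ι ⊕ Unit) m K :=
  fromRows Eᵀ (replicateRow Unit ((p ⬝ᵥ p)⁻¹ • p))

namespace IsTangentFrame

variable {p : m → K} {E : Matrix m ι K}

theorem adaptedCoframe_mul_adaptedFrame (h : IsTangentFrame p E) (hp : p ⬝ᵥ p ≠ 0) :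
    adaptedCoframe p E * adaptedFrame p E = 1 := by
  rw [adaptedCoframe, adaptedFrame, fromRows_mul_fromCols, ← fromBlocks_one]
  congr 1
  · exact h.transpose_mul_self
  · rw [← replicateCol_mulVec, h.transpose_mulVec_eq_zero, replicateCol_zero]
  · rw [← replicateRow_vecMul, smul_vecMul, h.vecMul_eq_zero, smul_zero, replicateRow_zero]
  · ext
    simp [replicateRow_mul_replicateCol_apply, hp]

theorem adaptedFrame_mul_adaptedCoframe [DecidableEq m] (h : IsTangentFrame p E)
    (hp : p ⬝ᵥ p ≠ 0) : adaptedFrame p E * adaptedCoframe p E = 1 := by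
  have hcard : Fintype.card m = Fintype.card (ι ⊕ Unit) := by simp [h.card_eq]
  exact (mul_eq_one_comm_of_card_eq _ _ _ hcard).2 (h.adaptedCoframe_mul_adaptedFrame hp)

theorem mul_transpose_self [DecidableEq m] (h : IsTangentFrame p E) (hp : p ⬝ᵥ p ≠ 0) :
    E * Eᵀ = 1 - (p ⬝ᵥ p)⁻¹ • vecMulVec p p := by
  rw [eq_sub_iff_add_eq, ← h.adaptedFrame_mul_adaptedCoframe hp, adaptedFrame, adaptedCoframe,
    fromCols_mul_fromRows, ← vecMulVec_eq, vecMulVec_smul]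

theorem trace_transpose_mul_mul (h : IsTangentFrame p E) (hp : p ⬝ᵥ p ≠ 0) (A : Matrix m m K) :
    (Eᵀ * A * E).trace = A.trace - p ⬝ᵥ A *ᵥ p / (p ⬝ᵥ p) := by
  classical
  calc (Eᵀ * A * E).trace
      = (A * (E * Eᵀ)).trace := by rw [Matrix.mul_assoc, trace_mul_comm, Matrix.mul_assoc]
    _ = A.trace - p ⬝ᵥ A *ᵥ p / (p ⬝ᵥ p) := by
      rw [h.mul_transpose_self hp, mul_sub, mul_one, trace_sub, mul_smul_comm, mul_vecMulVec,
        trace_smul, trace_vecMulVec, dotProduct_comm (A *ᵥ p), smul_eq_mul, inv_mul_eq_div]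

theorem adaptedCoframe_mul_mul_adaptedFrame (h : IsTangentFrame p E) (hp : p ⬝ᵥ p ≠ 0)
    {A : Matrix m m K} {c : K} (hA : p ᵥ* A = c • p) :
    adaptedCoframe p E * A * adaptedFrame p E =
      fromBlocks (Eᵀ * A * E) (replicateCol Unit (Eᵀ *ᵥ A *ᵥ p)) 0 (c • 1) := by
  rw [adaptedCoframe, adaptedFrame, fromRows_mul, fromRows_mul_fromCols,
    ← replicateRow_vecMul, smul_vecMul, hA]
  congr 1
  · rw [← replicateCol_mulVec, mulVec_mulVec]
  · rw [← replicateRow_vecMul, smul_vecMul, smul_vecMul, h.vecMul_eq_zero, smul_zero, smul_zero,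
      replicateRow_zero]
  · ext
    simp [replicateRow_mul_replicateCol_apply, mul_left_comm _ c, hp]

theorem det_eq_mul_det_transpose_mul_mul [DecidableEq m] (h : IsTangentFrame p E)
    (hp : p ⬝ᵥ p ≠ 0) {A : Matrix m m K} {c : K} (hA : p ᵥ* A = c • p) :
    A.det = c * (Eᵀ * A * E).det := by
  rw [← det_conj_of_mul_eq_one (h.adaptedCoframe_mul_adaptedFrame hp)
      (h.adaptedFrame_mul_adaptedCoframe hp),
    h.adaptedCoframe_mul_mul_adaptedFrame hp hA, det_fromBlocks_zero₂₁, mul_comm]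
  simp

theorem det_one_add_smul [DecidableEq m] (h : IsTangentFrame p E) (hp : p ⬝ᵥ p ≠ 0)
    {A : Matrix m m K} {c : K} (hA : p ᵥ* A = c • p) (t : K) :
    (1 + t • A).det = (1 + t * c) * (1 + t • (Eᵀ * A * E)).det := by
  have hleft : p ᵥ* (1 + t • A) = (1 + t * c) • p := by
    rw [vecMul_add, vecMul_one, vecMul_smul, hA, add_smul, one_smul, mul_smul]
  have hcompress : Eᵀ * (1 + t • A) * E = 1 + t • (Eᵀ * A * E) := by
    rw [Matrix.mul_add, Matrix.mul_one, Matrix.add_mul, h.transpose_mul_self, Matrix.mul_smul,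
      Matrix.smul_mul]
  rw [h.det_eq_mul_det_transpose_mul_mul hp hleft, hcompress]

end IsTangentFrame

end AdaptedFrame

section ExtendedShape

variable {K m ι : Type*} [Field K] [Fintype m]

/-- The mean curvature of a level set, multiplied by `‖p‖`, in terms of the gradient `p` and the
Hessian `H` of its defining function. -/
def meanCurvature (p : m → K) (H : Matrix m m K) : K :=
  -H.trace + p ⬝ᵥ H *ᵥ p / (p ⬝ᵥ p)

/-- The extended shape operator of a level set, multiplied by `‖p‖`, in terms of the gradient `p`
and the Hessian `H` of its defining function. -/
def extendedShape (p : m → K) (H : Matrix m m K) : Matrix m m K :=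
  -H - (H.trace / (p ⬝ᵥ p)) • vecMulVec p p +
    (p ⬝ᵥ p)⁻¹ • (vecMulVec p (p ᵥ* H) + vecMulVec (p ᵥ* H) p)

theorem vecMul_extendedShape {p : m → K} (hp : p ⬝ᵥ p ≠ 0) (H : Matrix m m K) :
    p ᵥ* extendedShape p H = meanCurvature p H • p := by
  have hdot : p ⬝ᵥ (p ᵥ* H) = p ⬝ᵥ H *ᵥ p := by rw [dotProduct_mulVec, dotProduct_comm]
  simp only [extendedShape, meanCurvature, vecMul_add, vecMul_sub, vecMul_neg, vecMul_smul,
    vecMul_vecMulVec, hdot]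
  ext a
  simp only [Pi.add_apply, Pi.sub_apply, Pi.neg_apply, Pi.smul_apply, smul_eq_mul]
  field_simp
  ring

variable [Fintype ι] [DecidableEq ι] {p : m → K} {E : Matrix m ι K}

theorem IsTangentFrame.transpose_mul_extendedShape_mul (h : IsTangentFrame p E)
    (H : Matrix m m K) : Eᵀ * extendedShape p H * E = -(Eᵀ * H * E) := by
  simp only [extendedShape, Matrix.mul_add, Matrix.mul_sub, Matrix.mul_neg, Matrix.mul_smul,
    mul_vecMulVec, Matrix.add_mul, Matrix.neg_mul, Matrix.smul_mul, vecMulVec_mul,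
    h.vecMul_eq_zero, h.transpose_mulVec_eq_zero, zero_vecMulVec, vecMulVec_zero,
    Matrix.zero_mul, smul_zero, sub_zero, add_zero]

theorem IsTangentFrame.meanCurvature_eq_trace (h : IsTangentFrame p E) (hp : p ⬝ᵥ p ≠ 0)
    (H : Matrix m m K) : meanCurvature p H = (-(Eᵀ * H * E)).trace := by
  rw [trace_neg, h.trace_transpose_mul_mul hp, meanCurvature, neg_sub, sub_eq_neg_add]

theorem IsTangentFrame.det_one_add_smul_extendedShape [DecidableEq m] (h : IsTangentFrame p E)
    (hp : p ⬝ᵥ p ≠ 0) (H : Matrix m m K) (t : K) :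
    (1 + t • extendedShape p H).det =
      (1 + t * meanCurvature p H) * (1 + t • -(Eᵀ * H * E)).det := by
  rw [h.det_one_add_smul hp (vecMul_extendedShape hp H), h.transpose_mul_extendedShape_mul]

end ExtendedShape

section LevelSet

variable {m : ℕ} (Φ : EuclideanSpace ℝ (Fin m) → ℝ) (x : EuclideanSpace ℝ (Fin m))

/-- The Hessian matrix `(∂ₐ∂_bΦ(x))`, with the outer derivative indexing the rows. -/
def hessianMatrix : Matrix (Fin m) (Fin m) ℝ :=
  Matrix.of (pderiv2 Φ x)

theorem pderiv1_eq_gradient : pderiv1 Φ x = (gradient Φ x).ofLp := by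
  ext a
  have hinner : inner ℝ (gradient Φ x) (EuclideanSpace.single a 1) = pderiv1 Φ x a :=
    InnerProductSpace.toDual_symm_apply
  rw [← hinner, EuclideanSpace.inner_single_right]
  simp

theorem Amcurv_eq_meanCurvature :
    Amcurv Φ x = meanCurvature (gradient Φ x).ofLp (hessianMatrix Φ x) := by
  rw [← pderiv1_eq_gradient]
  simp only [Amcurv, meanCurvature, hessianMatrix, trace, diag_apply, of_apply, dotProduct,
    mulVec, Finset.mul_sum, sq, mul_assoc, mul_comm (pderiv1 _ _ _) (pderiv2 _ _ _ _)]

theorem Mmat_eq_extendedShape :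
    Mmat Φ x = extendedShape (gradient Φ x).ofLp (hessianMatrix Φ x) := by
  rw [← pderiv1_eq_gradient]
  ext a b
  simp only [Mmat, extendedShape, hessianMatrix, trace, diag_apply, of_apply, dotProduct, vecMul,
    sq, Matrix.add_apply, Matrix.sub_apply, Matrix.neg_apply, Matrix.smul_apply, vecMulVec_apply,
    smul_eq_mul]
  ring

end LevelSet

theorem stmt7_general {ι : Type*} [Fintype ι] [DecidableEq ι] {m : ℕ}
    (Φ : EuclideanSpace ℝ (Fin m) → ℝ) (x : EuclideanSpace ℝ (Fin m)) (hgrad : gradient Φ x ≠ 0)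
    {E : Matrix (Fin m) ι ℝ} (hE : IsTangentFrame (gradient Φ x).ofLp E)
    {B : Matrix ι ι ℝ} (hB : B = -(Eᵀ * hessianMatrix Φ x * E)) :
    Amcurv Φ x = B.trace ∧
    ∀ t : ℝ, (1 + t • Mmat Φ x).det = (1 + t * Amcurv Φ x) * (1 + t • B).det := by
  have hp : (gradient Φ x).ofLp ⬝ᵥ (gradient Φ x).ofLp ≠ 0 := by simpa using hgrad
  rw [hB, Amcurv_eq_meanCurvature, Mmat_eq_extendedShape]
  exact ⟨hE.meanCurvature_eq_trace hp _, hE.det_one_add_smul_extendedShape hp _⟩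

/-- If `Φ : ℝ^{n+1} → ℝ` is C² and `∇Φ(x) = e_{n+1}` (adjusted
coordinates), then with `B` the `n×n` matrix `B_{ij} = -∂ᵢ∂ⱼΦ(x)` one has
`A_mcurv(Φ)(x) = trace B` and, for every `t ∈ ℝ`,
`det(I_{n+1} + t·M(Φ)(x)) = (1 + t·A_mcurv(Φ)(x)) · det(I_n + t·B)`. -/
theorem stmt7 (n : ℕ) (Φ : EuclideanSpace ℝ (Fin (n + 1)) → ℝ)
    (hΦ : ContDiff ℝ 2 Φ)
    (x : EuclideanSpace ℝ (Fin (n + 1)))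
    (hgrad : gradient Φ x = EuclideanSpace.single (Fin.last n) 1)
    (B : Matrix (Fin n) (Fin n) ℝ)
    (hB : B = Matrix.of fun i j => -pderiv2 Φ x i.castSucc j.castSucc) :
    Amcurv Φ x = B.trace ∧
    ∀ t : ℝ, (1 + t • Mmat Φ x).det = (1 + t * Amcurv Φ x) * (1 + t • B).det :=
  stmt7_general Φ x (by simp [hgrad])
    (by rw [hgrad]; exact isTangentFrame_coordinateFrame (Fin.last n))
    (by rw [hB, transpose_coordinateFrame_mul_mul, Fin.succAbove_last]; rfl)
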